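/- Assume T is connected. Let (U,V) and (V,U) be cotorsion pairs in T, set C := U ∩ V, and assume C contains a nonzero object. Then the following are equivalent: (a) C is cluster tilting; (b) whenever (S,R) and (R,S) are cotorsion pairs in T with S ∩ R = C, one has S = C; (c) T/C is abelian; (d) both T/U and T/V are abelian. -/

import Mathlib

/-!
The implications out of cluster tilting are formal. If `C` is cluster tilting and `(S, R)`, `(R, S)`
are cotorsion pairs with core `C`, then `S ⊆ C^⊥1 = C` (`ClusterTilting.eq_fst`), so in particular
`U = V = C`; and `T/C` is then abelian by the theorem of Koenig and Zhu
(`CotorsionPair.isAbelian_quot`), whose kernels, cokernels and normality statements all come from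
approximation triangles. Conversely, (b) applied to `(U, V)` and to `(V, U)` gives `U = V = C`.

The converse for (c) and (d) is `CotorsionPair.snd_subset_fst`: if `(U, V)` and `(V, U)` are
cotorsion pairs, `U` contains a nonzero object, `T` is connected and `T/U` is abelian, then
`V ⊆ U`. For (d) it is applied to `(U, V)` and `(V, U)`. For (c) it is applied to `(C, C^⊥1)`, which
is again a pair of opposite cotorsion pairs because the core of such a pair is pre-cluster tilting
(`CotorsionPair.core_preClusterTilting`).

The proof of `V ⊆ U` has three steps.

* Given triangles `Y ⟶ C₀ ⟶ Y' -q⟶ Y⟦1⟧` and `Y' -j⟶ C₁ ⟶ Y''` with `C₀ ∈ U ∩ V`, `C₁ ∈ U` and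
  `Y', Y'' ∈ V`, the image factorisation in `T/U` of the connecting morphism `Y⟦1⟧ ⟶ C₀⟦1⟧` forces
  `𝟙 Y'` to be the sum of a morphism through `q` and one through `j`
  (`CotorsionPair.exists_splitting`).
* If `X ∈ V` has a local endomorphism ring, one of the two summands is invertible, and this implies
  that `X ∈ U` or that `X` has no nonzero morphism to or from `U`
  (`CotorsionPair.mem_or_orthPart`). By the Krull–Schmidt property every object of `V` is a sum of
  an object of `U` and an object of the part `orthPart U V` orthogonal to `U`.
* `orthPart U V` is closed under both shifts, and `T` is the direct sum of it and of its own
  two-sided orthogonal, which contains `U`. By connectedness it is zero, that is, `V ⊆ U`.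
-/

open CategoryTheory CategoryTheory.Limits CategoryTheory.Pretriangulated

attribute [local instance] CategoryTheory.Limits.hasBinaryBiproducts_of_finite_biproducts

universe v u

namespace ClusterPaper

variable {T : Type u} [Category.{v} T] [Preadditive T] [HasZeroObject T]
  [HasShift T ℤ] [∀ n : ℤ, (shiftFunctor T n).Additive] [Pretriangulated T]
  [HasFiniteBiproducts T]

/-- `X` is a direct summand of `Z`. -/
def IsSummand (X Z : T) : Prop :=
  ∃ (s : X ⟶ Z) (r : Z ⟶ X), s ≫ r = 𝟙 X

/-- The category is Krull–Schmidt: every object is a finite direct sum of objects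
whose endomorphism rings are local. -/
def IsKrullSchmidt : Prop :=
  ∀ X : T, ∃ (n : ℕ) (f : Fin n → T),
    Nonempty (X ≅ ⨁ f) ∧ ∀ i, IsLocalRing (End (f i))

/-- A class of objects is closed under isomorphisms. -/
def IsoClosed (P : T → Prop) : Prop := ∀ ⦃X Y : T⦄, (X ≅ Y) → P X → P Y

/-- A class of objects is closed under finite direct sums. -/
def SumClosed (P : T → Prop) : Prop :=
  ∀ ⦃X Y : T⦄, P X → P Y → P (X ⊞ Y)

/-- A class of objects is closed under direct summands. -/
def SummandClosed (P : T → Prop) : Prop := ∀ ⦃X Z : T⦄, IsSummand X Z → P Z → P X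

/-- `Hom(X, Y[1]) = 0`, i.e. `E(X,Y) = 0` for the extriangulated structure on a
triangulated category. -/
def Ext1Zero (X Y : T) : Prop := ∀ f : X ⟶ Y⟦(1 : ℤ)⟧, f = 0

/-- The right perpendicular category `P^⊥1`. -/
def rightPerp (P : T → Prop) : T → Prop := fun X => ∀ ⦃C : T⦄, P C → Ext1Zero C X

/-- The left perpendicular category `^⊥1 P`. -/
def leftPerp (P : T → Prop) : T → Prop := fun X => ∀ ⦃C : T⦄, P C → Ext1Zero X C

/-- A cotorsion pair `(U, V)`. -/
structure CotorsionPair (U V : T → Prop) : Prop where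
  summandClosed_fst : SummandClosed U
  summandClosed_snd : SummandClosed V
  ext_zero : ∀ ⦃X Y : T⦄, U X → V Y → Ext1Zero X Y
  tri_left : ∀ B : T, ∃ (VB UB : T) (f : VB ⟶ UB) (g : UB ⟶ B) (h : B ⟶ VB⟦(1 : ℤ)⟧),
    V VB ∧ U UB ∧ Triangle.mk f g h ∈ distTriang T
  tri_right : ∀ B : T, ∃ (VB UB : T) (f : B ⟶ VB) (g : VB ⟶ UB) (h : UB ⟶ B⟦(1 : ℤ)⟧),
    V VB ∧ U UB ∧ Triangle.mk f g h ∈ distTriang T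

/-- `f : C₀ ⟶ X` is a right `P`-approximation of `X`. -/
def IsRightApprox (P : T → Prop) {C₀ X : T} (f : C₀ ⟶ X) : Prop :=
  ∀ ⦃C' : T⦄, P C' → ∀ g : C' ⟶ X, ∃ h : C' ⟶ C₀, h ≫ f = g

/-- `f : X ⟶ C₀` is a left `P`-approximation of `X`. -/
def IsLeftApprox (P : T → Prop) {X C₀ : T} (f : X ⟶ C₀) : Prop :=
  ∀ ⦃C' : T⦄, P C' → ∀ g : X ⟶ C', ∃ h : C₀ ⟶ C', f ≫ h = g

/-- Every object admits a right `P`-approximation. -/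
def ContravariantlyFinite (P : T → Prop) : Prop :=
  ∀ X : T, ∃ (C₀ : T) (f : C₀ ⟶ X), P C₀ ∧ IsRightApprox P f

/-- Every object admits a left `P`-approximation. -/
def CovariantlyFinite (P : T → Prop) : Prop :=
  ∀ X : T, ∃ (C₀ : T) (f : X ⟶ C₀), P C₀ ∧ IsLeftApprox P f

/-- A pre-cluster tilting subcategory. -/
structure PreClusterTilting (C : T → Prop) : Prop where
  sumClosed : SumClosed C
  summandClosed : SummandClosed C
  rigid : ∀ ⦃X Y : T⦄, C X → C Y → Ext1Zero X Y
  contravariantlyFinite : ContravariantlyFinite C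
  covariantlyFinite : CovariantlyFinite C
  perp_eq : rightPerp C = leftPerp C

/-- A cluster tilting subcategory. -/
structure ClusterTilting (C : T → Prop) extends PreClusterTilting C : Prop where
  eq_rightPerp : C = rightPerp C
  eq_leftPerp : C = leftPerp C

/-- `f` factors through an object of `D`. -/
def FactorsThru (D : T → Prop) {X Y : T} (f : X ⟶ Y) : Prop :=
  ∃ (Z : T) (g : X ⟶ Z) (h : Z ⟶ Y), D Z ∧ g ≫ h = f

/-- The hom relation identifying two morphisms whose difference factors through `D`. -/
def quotRel (D : T → Prop) : HomRel T := fun {X Y} f g => FactorsThru D (f - g)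

/-- The additive quotient category `T/D`. -/
abbrev QuotCat (D : T → Prop) := CategoryTheory.Quotient (quotRel D)

/-- A category is abelian (as a property): it admits an abelian structure. -/
def IsAbelian (A : Type*) [Category A] : Prop := Nonempty (Abelian A)

/-- An object is indecomposable: it is nonzero, and in any direct sum
decomposition one summand is zero. -/
def Indec (X : T) : Prop :=
  ¬ IsZero X ∧ ∀ (Y Z : T), (X ≅ Y ⊞ Z) → IsZero Y ∨ IsZero Z

/-- `X ∈ CoCone(P, Q)`: there is a triangle `X → B → C' → X[1]` with `B ∈ P`, `C' ∈ Q`. -/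
def CoCone (P Q : T → Prop) : T → Prop := fun X =>
  ∃ (B C' : T) (f : X ⟶ B) (g : B ⟶ C') (h : C' ⟶ X⟦(1 : ℤ)⟧),
    P B ∧ Q C' ∧ Triangle.mk f g h ∈ distTriang T

/-- `Y ∈ Cone(P, Q)`: there is a triangle `A → B → Y → A[1]` with `A ∈ P`, `B ∈ Q`. -/
def Cone (P Q : T → Prop) : T → Prop := fun Y =>
  ∃ (A B : T) (f : A ⟶ B) (g : B ⟶ Y) (h : Y ⟶ A⟦(1 : ℤ)⟧),
    P A ∧ Q B ∧ Triangle.mk f g h ∈ distTriang T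

/-- `U + V`: objects isomorphic to a direct sum of an object of `U` and an object of `V`. -/
def plusCat (U V : T → Prop) : T → Prop := fun X =>
  ∃ (A B : T), U A ∧ V B ∧ Nonempty (X ≅ A ⊞ B)

/-- A class of objects is closed under extensions. -/
def ExtClosed (P : T → Prop) : Prop :=
  ∀ ⦃A B C' : T⦄ (f : A ⟶ B) (g : B ⟶ C') (h : C' ⟶ A⟦(1 : ℤ)⟧),
    (Triangle.mk f g h ∈ distTriang T) → P A → P C' → P B

/-- The triangulated category `T` is connected: it is not the direct sum of two
nonzero triangulated (iso-closed, summand-closed, extension-closed, mutually Hom-orthogonal)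
subcategories. -/
def ConnectedCat : Prop :=
  ¬ ∃ (T₁ T₂ : T → Prop),
    IsoClosed T₁ ∧ IsoClosed T₂ ∧ SummandClosed T₁ ∧ SummandClosed T₂ ∧
    ExtClosed T₁ ∧ ExtClosed T₂ ∧
    (∃ X, T₁ X ∧ ¬ IsZero X) ∧ (∃ X, T₂ X ∧ ¬ IsZero X) ∧
    (∀ X : T, ∃ (A B : T), T₁ A ∧ T₂ B ∧ Nonempty (X ≅ A ⊞ B)) ∧
    (∀ ⦃X Y : T⦄, T₁ X → T₂ Y → ∀ f : X ⟶ Y, f = 0) ∧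
    (∀ ⦃X Y : T⦄, T₂ X → T₁ Y → ∀ f : X ⟶ Y, f = 0)

set_option linter.unusedSectionVars false

/-! ### Exactness of distinguished triangles -/

section Exactness

variable {A B C' X : T} {f : A ⟶ B} {g : B ⟶ C'} {h : C' ⟶ A⟦(1 : ℤ)⟧}

lemma yonA (H : Triangle.mk f g h ∈ distTriang T) (φ : A ⟶ X) (hφ : h ≫ φ⟦(1 : ℤ)⟧' = 0) :
    ∃ ψ : B ⟶ X, φ = f ≫ ψ := by
  obtain ⟨ψ, hψ⟩ : ∃ ψ : B⟦(1 : ℤ)⟧ ⟶ X⟦(1 : ℤ)⟧, φ⟦(1 : ℤ)⟧' = (-f⟦(1 : ℤ)⟧') ≫ ψ :=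
    Triangle.yoneda_exact₂ _ (rot_of_distTriang _ (rot_of_distTriang _ H)) (φ⟦(1 : ℤ)⟧') hφ
  obtain ⟨ψ, rfl⟩ := (shiftFunctor T (1 : ℤ)).map_surjective ψ
  refine ⟨-ψ, (shiftFunctor T (1 : ℤ)).map_injective ?_⟩
  rw [hψ]
  simp

lemma yonB (H : Triangle.mk f g h ∈ distTriang T) (φ : B ⟶ X) (hφ : f ≫ φ = 0) :
    ∃ ψ : C' ⟶ X, φ = g ≫ ψ := Triangle.yoneda_exact₂ _ H φ hφ

lemma yonC (H : Triangle.mk f g h ∈ distTriang T) (φ : C' ⟶ X) (hφ : g ≫ φ = 0) :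
    ∃ ψ : A⟦(1 : ℤ)⟧ ⟶ X, φ = h ≫ ψ := Triangle.yoneda_exact₃ _ H φ hφ

lemma yonA1 (H : Triangle.mk f g h ∈ distTriang T) (φ : A⟦(1 : ℤ)⟧ ⟶ X) (hφ : h ≫ φ = 0) :
    ∃ ψ : B⟦(1 : ℤ)⟧ ⟶ X, φ = f⟦(1 : ℤ)⟧' ≫ ψ := by
  obtain ⟨ψ, hψ⟩ : ∃ ψ : B⟦(1 : ℤ)⟧ ⟶ X, φ = (-f⟦(1 : ℤ)⟧') ≫ ψ :=
    Triangle.yoneda_exact₂ _ (rot_of_distTriang _ (rot_of_distTriang _ H)) φ hφ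
  exact ⟨-ψ, by rw [hψ]; simp⟩

lemma coyA1 (H : Triangle.mk f g h ∈ distTriang T) (φ : X ⟶ A⟦(1 : ℤ)⟧)
    (hφ : φ ≫ f⟦(1 : ℤ)⟧' = 0) : ∃ ψ : X ⟶ C', φ = ψ ≫ h :=
  Triangle.coyoneda_exact₁ _ H φ hφ

lemma coyB (H : Triangle.mk f g h ∈ distTriang T) (φ : X ⟶ B) (hφ : φ ≫ g = 0) :
    ∃ ψ : X ⟶ A, φ = ψ ≫ f := Triangle.coyoneda_exact₂ _ H φ hφ

lemma coyC (H : Triangle.mk f g h ∈ distTriang T) (φ : X ⟶ C') (hφ : φ ≫ h = 0) :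
    ∃ ψ : X ⟶ B, φ = ψ ≫ g := Triangle.coyoneda_exact₃ _ H φ hφ

lemma coyB1 (H : Triangle.mk f g h ∈ distTriang T) (φ : X ⟶ B⟦(1 : ℤ)⟧)
    (hφ : φ ≫ g⟦(1 : ℤ)⟧' = 0) : ∃ ψ : X ⟶ A⟦(1 : ℤ)⟧, φ = ψ ≫ f⟦(1 : ℤ)⟧' := by
  obtain ⟨ψ, hψ⟩ : ∃ ψ : X ⟶ A⟦(1 : ℤ)⟧, φ = ψ ≫ (-f⟦(1 : ℤ)⟧') :=
    Triangle.coyoneda_exact₁ _ (rot_of_distTriang _ H) φ hφ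
  exact ⟨-ψ, by rw [hψ]; simp⟩

lemma coyC1 (H : Triangle.mk f g h ∈ distTriang T) (φ : X ⟶ C'⟦(1 : ℤ)⟧)
    (hφ : φ ≫ h⟦(1 : ℤ)⟧' = 0) : ∃ ψ : X ⟶ B⟦(1 : ℤ)⟧, φ = ψ ≫ g⟦(1 : ℤ)⟧' := by
  obtain ⟨ψ, hψ⟩ : ∃ ψ : X ⟶ B⟦(1 : ℤ)⟧, φ = ψ ≫ (-g⟦(1 : ℤ)⟧') :=
    Triangle.coyoneda_exact₁ _ (rot_of_distTriang _ (rot_of_distTriang _ H)) φ hφ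
  exact ⟨-ψ, by rw [hψ]; simp⟩

lemma tri12 (H : Triangle.mk f g h ∈ distTriang T) : f ≫ g = 0 :=
  comp_distTriang_mor_zero₁₂ _ H

lemma tri23 (H : Triangle.mk f g h ∈ distTriang T) : g ≫ h = 0 :=
  comp_distTriang_mor_zero₂₃ _ H

lemma tri31 (H : Triangle.mk f g h ∈ distTriang T) : h ≫ f⟦(1 : ℤ)⟧' = 0 :=
  comp_distTriang_mor_zero₃₁ _ H

lemma rot (H : Triangle.mk f g h ∈ distTriang T) :
    Triangle.mk g h (-f⟦(1 : ℤ)⟧') ∈ distTriang T := rot_of_distTriang _ H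

end Exactness

lemma IsSummand.of_iso {X Y : T} (e : X ≅ Y) : IsSummand X Y := ⟨e.hom, e.inv, e.hom_inv_id⟩

lemma SummandClosed.isoClosed {P : T → Prop} (h : SummandClosed P) : IsoClosed P :=
  fun _ _ e hX => h (IsSummand.of_iso e.symm) hX

lemma SummandClosed.of_isZero {P : T → Prop} (h : SummandClosed P) {X Z : T} (hX : P X)
    (hZ : IsZero Z) : P Z :=
  h ⟨0, 0, hZ.eq_of_src _ _⟩ hX

lemma SummandClosed.biprod_left {P : T → Prop} (h : SummandClosed P) {X Y : T} (hX : P (X ⊞ Y)) :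
    P X := h ⟨biprod.inl, biprod.fst, by simp⟩ hX

lemma SummandClosed.biprod_right {P : T → Prop} (h : SummandClosed P) {X Y : T} (hX : P (X ⊞ Y)) :
    P Y := h ⟨biprod.inr, biprod.snd, by simp⟩ hX

/-! ### Cotorsion pairs -/

/-- The two classes of a cotorsion pair determine each other as `Ext¹`-orthogonals. -/
lemma CotorsionPair.mem_snd {U V : T → Prop} (h : CotorsionPair U V) {X : T}
    (hX : ∀ A, U A → Ext1Zero A X) : V X := by
  obtain ⟨VB, UB, f, g, k, hV, hU, H⟩ := h.tri_right X
  obtain ⟨r, hr⟩ := yonA H (𝟙 X) (by simpa using hX _ hU k)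
  exact h.summandClosed_snd ⟨f, r, hr.symm⟩ hV

lemma CotorsionPair.mem_fst {U V : T → Prop} (h : CotorsionPair U V) {X : T}
    (hX : ∀ B, V B → Ext1Zero X B) : U X := by
  obtain ⟨VB, UB, f, g, k, hV, hU, H⟩ := h.tri_left X
  obtain ⟨r, hr⟩ := coyC H (𝟙 X) (by simpa using hX _ hV k)
  exact h.summandClosed_fst ⟨r, g, hr.symm⟩ hU

lemma CotorsionPair.ext_fst {U V : T → Prop} (h : CotorsionPair U V) : ExtClosed U := by
  intro A B C' f g k H hA hC
  refine h.mem_fst fun X hX φ => ?_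
  obtain ⟨ψ, rfl⟩ := yonB H φ (h.ext_zero hA hX _)
  rw [h.ext_zero hC hX ψ, comp_zero]

lemma CotorsionPair.ext_snd {U V : T → Prop} (h : CotorsionPair U V) : ExtClosed V := by
  intro A B C' f g k H hA hC
  refine h.mem_snd fun X hX φ => ?_
  obtain ⟨ψ, rfl⟩ := coyB1 H φ (h.ext_zero hX hC _)
  rw [h.ext_zero hX hA ψ, zero_comp]

lemma ExtClosed.sumClosed {P : T → Prop} (h : ExtClosed P) : SumClosed P := fun X Y hX hY =>
  h _ _ _ (binaryBiproductTriangle_distinguished X Y) hX hY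

lemma CotorsionPair.exists_mem {U V : T → Prop} (h : CotorsionPair U V) :
    ∃ A, U A ∧ V A ∧ IsZero A := by
  obtain ⟨VB, UB, f, g, k, hV, hU, H⟩ := h.tri_left (HasZeroObject.zero' T).zero
  exact ⟨_, h.summandClosed_fst.of_isZero hU (isZero_zero T),
    h.summandClosed_snd.of_isZero hV (isZero_zero T), isZero_zero T⟩

/-- A right approximation of `X` by the core of a pair of opposite cotorsion pairs. -/
lemma CotorsionPair.core_contravariantlyFinite {U V : T → Prop} (h : CotorsionPair U V)
    (h' : CotorsionPair V U) : ContravariantlyFinite (fun X => U X ∧ V X) := by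
  intro X
  obtain ⟨V₁, U₁, f, g, k, hV, hU, H⟩ := h.tri_left X
  obtain ⟨U₂, V₂, f', g', k', hU₂, hV₂, H'⟩ := h'.tri_left U₁
  refine ⟨V₂, g' ≫ g, ⟨h.ext_fst _ _ _ H' hU₂ hU, hV₂⟩, ?_⟩
  intro D hD φ
  obtain ⟨ψ, rfl⟩ := coyC H φ (h.ext_zero hD.1 hV _)
  obtain ⟨χ, rfl⟩ := coyC H' ψ (h'.ext_zero hD.2 hU₂ _)
  exact ⟨χ, by simp⟩

lemma CotorsionPair.core_covariantlyFinite {U V : T → Prop} (h : CotorsionPair U V)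
    (h' : CotorsionPair V U) : CovariantlyFinite (fun X => U X ∧ V X) := by
  intro X
  obtain ⟨V₁, U₁, f, g, k, hV, hU, H⟩ := h.tri_right X
  obtain ⟨U₂, V₂, f', g', k', hU₂, hV₂, H'⟩ := h'.tri_right V₁
  refine ⟨U₂, f ≫ f', ⟨hU₂, h.ext_snd _ _ _ H' hV hV₂⟩, ?_⟩
  intro D hD φ
  obtain ⟨ψ, rfl⟩ := yonA H φ (h.ext_zero hU hD.2 _)
  obtain ⟨χ, rfl⟩ := yonA H' ψ (h'.ext_zero hV₂ hD.1 _)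
  exact ⟨χ, by simp⟩

section Perp

variable [IsTriangulated T]

/-- An object right orthogonal to the core is left orthogonal to it: after adding a summand and
shifting, it becomes an extension of an object of `V⟦1⟧` by an object of `U⟦1⟧`. -/
lemma CotorsionPair.leftPerp_of_rightPerp {U V : T → Prop} (h : CotorsionPair U V)
    (h' : CotorsionPair V U) {X : T} (hX : rightPerp (fun X => U X ∧ V X) X) :
    leftPerp (fun X => U X ∧ V X) X := by
  obtain ⟨V₁, U₁, f, g, k, hV, hU, H⟩ := h.tri_right X
  obtain ⟨U₂, D, f', g', k', hU₂, hD, H'⟩ := h'.tri_left U₁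
  have hDU : U D := h.ext_fst _ _ _ H' hU₂ hU
  have h0 : g' ≫ k = 0 := hX ⟨hDU, hD⟩ _
  obtain ⟨Z, v, w, H₁₃⟩ := distinguished_cocone_triangle (0 : D ⟶ X⟦(1 : ℤ)⟧)
  have O := Triangulated.someOctahedron h0 (rot H') (rot (rot H)) H₁₃
  intro C₁ hC₁ φ
  obtain ⟨r, hr⟩ := yonB H₁₃ (𝟙 _) (by simp)
  have e₁ : O.m₁ ≫ r ≫ φ⟦(1 : ℤ)⟧' = 0 := by
    obtain ⟨a, ha⟩ := (shiftFunctor T (1 : ℤ)).map_surjective (O.m₁ ≫ r)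
    rw [← Category.assoc, ← ha, ← Functor.map_comp, h.ext_zero hU₂ hC₁.2 (a ≫ φ),
      Functor.map_zero]
  obtain ⟨s, hs⟩ := yonB O.mem _ e₁
  obtain ⟨t, rfl⟩ := (shiftFunctor T (1 : ℤ)).map_surjective s
  apply (shiftFunctor T (1 : ℤ)).map_injective
  rw [Functor.map_zero, ← Category.id_comp (φ⟦(1 : ℤ)⟧'), hr, Category.assoc, hs,
    h'.ext_zero hV hC₁.1 t]
  simp

/-- Dual of `CotorsionPair.leftPerp_of_rightPerp`. -/
lemma CotorsionPair.rightPerp_of_leftPerp {U V : T → Prop} (h : CotorsionPair U V)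
    (h' : CotorsionPair V U) {X : T} (hX : leftPerp (fun X => U X ∧ V X) X) :
    rightPerp (fun X => U X ∧ V X) X := by
  obtain ⟨V₁, U₁, f, g, k, hV, hU, H⟩ := h.tri_left X
  obtain ⟨D, V₂, f', g', k', hD, hV₂, H'⟩ := h'.tri_right V₁
  have hDV : V D := h.ext_snd _ _ _ H' hV hV₂
  have h0 : k ≫ (-f'⟦(1 : ℤ)⟧') = 0 := by
    rw [Preadditive.comp_neg, hX ⟨hD, hDV⟩ (k ≫ f'⟦(1 : ℤ)⟧'), neg_zero]
  obtain ⟨Z, v, w, H₁₃⟩ := distinguished_cocone_triangle (0 : X ⟶ D⟦(1 : ℤ)⟧)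
  have O := Triangulated.someOctahedron h0 (rot (rot H)) (rot (rot (rot H'))) H₁₃
  intro C₁ hC₁ φ
  obtain ⟨ψ, rfl⟩ := coyA1 H₁₃ φ (by simp)
  obtain ⟨χ, rfl⟩ := coyB O.mem ψ (h.ext_zero hC₁.1 hV₂ _)
  rw [h'.ext_zero hC₁.2 hU χ]
  simp

lemma CotorsionPair.core_rightPerp_eq {U V : T → Prop} (h : CotorsionPair U V)
    (h' : CotorsionPair V U) :
    rightPerp (fun X => U X ∧ V X) = leftPerp (fun X => U X ∧ V X) := by
  funext X
  exact propext ⟨h.leftPerp_of_rightPerp h', h.rightPerp_of_leftPerp h'⟩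

lemma CotorsionPair.core_preClusterTilting {U V : T → Prop} (h : CotorsionPair U V)
    (h' : CotorsionPair V U) : PreClusterTilting (fun X => U X ∧ V X) where
  sumClosed _ _ hX hY := ⟨h.ext_fst.sumClosed hX.1 hY.1, h.ext_snd.sumClosed hX.2 hY.2⟩
  summandClosed _ _ hXZ hZ := ⟨h.summandClosed_fst hXZ hZ.1, h.summandClosed_snd hXZ hZ.2⟩
  rigid _ _ hX hY := h.ext_zero hX.1 hY.2
  contravariantlyFinite := h.core_contravariantlyFinite h'
  covariantlyFinite := h.core_covariantlyFinite h'
  perp_eq := h.core_rightPerp_eq h'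

end Perp

lemma rightPerp_summandClosed (P : T → Prop) : SummandClosed (rightPerp P) := by
  rintro X Z ⟨s, r, hsr⟩ hZ D hD φ
  rw [← Category.comp_id φ, ← CategoryTheory.Functor.map_id, ← hsr, Functor.map_comp, ← Category.assoc,
    hZ hD (φ ≫ s⟦(1 : ℤ)⟧'), Limits.zero_comp]

lemma leftPerp_summandClosed (P : T → Prop) : SummandClosed (leftPerp P) := by
  rintro X Z ⟨s, r, hsr⟩ hZ D hD φ
  rw [← Category.id_comp φ, ← hsr, Category.assoc, hZ hD (r ≫ φ), Limits.comp_zero]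

/-- A pre-cluster tilting subcategory `C` and its orthogonal `C^⊥1` form a cotorsion pair. -/
lemma PreClusterTilting.cotorsionPair_fst {C : T → Prop} (hC : PreClusterTilting C) :
    CotorsionPair C (rightPerp C) where
  summandClosed_fst := hC.summandClosed
  summandClosed_snd := rightPerp_summandClosed C
  ext_zero _ _ hX hY := hY hX
  tri_left B := by
    obtain ⟨C₀, g, hC₀, hg⟩ := hC.contravariantlyFinite B
    obtain ⟨K, f, h, H⟩ := distinguished_cocone_triangle₁ g
    refine ⟨K, C₀, f, g, h, ?_, hC₀, H⟩
    intro D hD φ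
    obtain ⟨ψ, rfl⟩ := coyA1 H φ (hC.rigid hD hC₀ _)
    obtain ⟨χ, rfl⟩ := hg hD ψ
    rw [Category.assoc, tri23 H, Limits.comp_zero]
  tri_right B := by
    obtain ⟨C₀, h, hC₀, hh⟩ := hC.contravariantlyFinite (B⟦(1 : ℤ)⟧)
    obtain ⟨Z, f, g, H⟩ := distinguished_cocone_triangle₂ h
    refine ⟨Z, C₀, f, g, h, ?_, hC₀, H⟩
    intro D hD φ
    obtain ⟨ψ, rfl⟩ := coyB1 H φ (hC.rigid hD hC₀ _)
    obtain ⟨χ, rfl⟩ := hh hD ψ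
    rw [Category.assoc, tri31 H, Limits.comp_zero]

lemma PreClusterTilting.cotorsionPair_snd {C : T → Prop} (hC : PreClusterTilting C) :
    CotorsionPair (rightPerp C) C where
  summandClosed_fst := rightPerp_summandClosed C
  summandClosed_snd := hC.summandClosed
  ext_zero _ _ hX hY := by
    rw [hC.perp_eq] at hX
    exact hX hY
  tri_right B := by
    obtain ⟨C₀, f, hC₀, hf⟩ := hC.covariantlyFinite B
    obtain ⟨K, g, h, H⟩ := distinguished_cocone_triangle f
    refine ⟨C₀, K, f, g, h, hC₀, ?_, H⟩
    rw [hC.perp_eq]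
    intro D hD φ
    obtain ⟨ψ, rfl⟩ := yonC H φ (hC.rigid hC₀ hD _)
    obtain ⟨ψ, rfl⟩ := (shiftFunctor T (1 : ℤ)).map_surjective ψ
    obtain ⟨χ, rfl⟩ := hf hD ψ
    rw [Functor.map_comp, ← Category.assoc, tri31 H, Limits.zero_comp]
  tri_left B := by
    -- a left approximation of `B⟦-1⟧` becomes, after shifting, the connecting morphism `B ⟶ C₀⟦1⟧`
    obtain ⟨C₀, i, hC₀, hi⟩ := hC.covariantlyFinite (B⟦(-1 : ℤ)⟧)
    let e : (B⟦(-1 : ℤ)⟧)⟦(1 : ℤ)⟧ ≅ B := (shiftEquiv T (1 : ℤ)).counitIso.app B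
    obtain ⟨Z, f, g, H⟩ := distinguished_cocone_triangle₂ (e.inv ≫ i⟦(1 : ℤ)⟧')
    refine ⟨C₀, Z, f, g, _, hC₀, ?_, H⟩
    rw [hC.perp_eq]
    intro D hD φ
    obtain ⟨ψ, rfl⟩ := yonB H φ (hC.rigid hC₀ hD _)
    obtain ⟨ψ', hψ'⟩ := (shiftFunctor T (1 : ℤ)).map_surjective (e.hom ≫ ψ)
    obtain ⟨χ, rfl⟩ := hi hD ψ'
    have : ψ = (e.inv ≫ i⟦(1 : ℤ)⟧') ≫ χ⟦(1 : ℤ)⟧' := by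
      rw [Category.assoc, ← Functor.map_comp, hψ', e.inv_hom_id_assoc]
    rw [this, ← Category.assoc, tri23 H, Limits.zero_comp]

/-! ### The additive quotient -/

/-- The conditions on a class of objects which make the morphisms factoring through it an ideal:
it contains a zero object and is closed under binary direct sums. -/
class IsAdditiveClass (D : T → Prop) : Prop where
  sum : SumClosed D
  zero : ∃ Z, D Z ∧ IsZero Z

namespace FactorsThru

variable {D : T → Prop} {X Y Z : T}

lemma of_mem_src (hX : D X) (f : X ⟶ Y) : FactorsThru D f := ⟨X, 𝟙 _, f, hX, by simp⟩

lemma of_mem_tgt (hY : D Y) (f : X ⟶ Y) : FactorsThru D f := ⟨Y, f, 𝟙 _, hY, by simp⟩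

lemma comp_left {g : Y ⟶ Z} (hg : FactorsThru D g) (f : X ⟶ Y) : FactorsThru D (f ≫ g) := by
  obtain ⟨W, a, b, hW, rfl⟩ := hg
  exact ⟨W, f ≫ a, b, hW, by simp⟩

lemma comp_right {f : X ⟶ Y} (hf : FactorsThru D f) (g : Y ⟶ Z) : FactorsThru D (f ≫ g) := by
  obtain ⟨W, a, b, hW, rfl⟩ := hf
  exact ⟨W, a, b ≫ g, hW, by simp⟩

lemma neg {f : X ⟶ Y} (hf : FactorsThru D f) : FactorsThru D (-f) := by
  obtain ⟨W, a, b, hW, rfl⟩ := hf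
  exact ⟨W, a, -b, hW, by simp⟩

variable [hD : IsAdditiveClass D]

lemma zero : FactorsThru D (0 : X ⟶ Y) := by
  obtain ⟨Z, hZ, -⟩ := hD.zero
  exact ⟨Z, 0, 0, hZ, by simp⟩

lemma add {f g : X ⟶ Y} (hf : FactorsThru D f) (hg : FactorsThru D g) : FactorsThru D (f + g) := by
  obtain ⟨W, a, b, hW, rfl⟩ := hf
  obtain ⟨W', a', b', hW', rfl⟩ := hg
  exact ⟨W ⊞ W', biprod.lift a a', biprod.desc b b', hD.sum hW hW', by simp⟩

lemma sub {f g : X ⟶ Y} (hf : FactorsThru D f) (hg : FactorsThru D g) : FactorsThru D (f - g) := by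
  rw [sub_eq_add_neg]
  exact hf.add hg.neg

end FactorsThru

instance quotRel_congruence (D : T → Prop) [IsAdditiveClass D] : Congruence (quotRel D) where
  equivalence :=
    { refl := fun f => by
        change FactorsThru D (f - f)
        rw [sub_self]
        exact FactorsThru.zero
      symm := fun {f g} h => by
        change FactorsThru D (g - f)
        rw [← neg_sub]
        exact FactorsThru.neg h
      trans := fun {f g k} h h' => by
        change FactorsThru D (f - k)
        rw [← sub_add_sub_cancel f g k]
        exact FactorsThru.add h h' }
  comp_left f g g' h := by
    change FactorsThru D (f ≫ g - f ≫ g')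
    rw [← Preadditive.comp_sub]
    exact FactorsThru.comp_left h f
  comp_right g h := by
    change FactorsThru D (_ ≫ g - _ ≫ g)
    rw [← Preadditive.sub_comp]
    exact FactorsThru.comp_right h g

/-- The preadditive structure on `T/D` induced by that of `T`. -/
@[reducible]
def quotPreadditive (D : T → Prop) [IsAdditiveClass D] : Preadditive (QuotCat D) :=
  Quotient.preadditive (quotRel D) (by
    intro X Y f₁ f₂ g₁ g₂ h h'
    change FactorsThru D _
    rw [add_sub_add_comm]
    exact FactorsThru.add h h')

/-- The projection functor `T ⥤ T/D`. -/
abbrev quotFunctor (D : T → Prop) : T ⥤ QuotCat D := Quotient.functor (quotRel D)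

section

variable (D : T → Prop) [IsAdditiveClass D]

lemma quot_map_eq_iff {X Y : T} (f g : X ⟶ Y) :
    (quotFunctor D).map f = (quotFunctor D).map g ↔ FactorsThru D (f - g) :=
  Quotient.functor_map_eq_iff (quotRel D) f g

/-- The morphisms that become zero in `T/D` are those factoring through `D`, whatever the structure
used to make sense of zero morphisms in `T/D`. -/
lemma quot_map_eq_zero_iff [I : HasZeroMorphisms (QuotCat D)] {X Y : T} (f : X ⟶ Y) :
    (quotFunctor D).map f = 0 ↔ FactorsThru D f := by
  let _ := quotPreadditive D
  obtain rfl : I = Preadditive.preadditiveHasZeroMorphisms := Subsingleton.elim _ _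
  have h0 : (quotFunctor D).map (0 : X ⟶ Y) = 0 := rfl
  rw [← h0, quot_map_eq_iff, sub_zero]

/-- Every morphism of `T/D` is represented by a morphism of `T`. -/
lemma quot_exists_rep {X Y : QuotCat D} (f : X ⟶ Y) :
    ∃ g : X.as ⟶ Y.as, (quotFunctor D).map g = f := (quotFunctor D).map_surjective f

end

section Abelian

/-! ### The quotient by a cluster tilting subcategory is abelian -/

variable {D : T → Prop}

lemma CotorsionPair.isAdditiveClass {U V : T → Prop} (h : CotorsionPair U V) :
    IsAdditiveClass U where
  sum := h.ext_fst.sumClosed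
  zero := by
    obtain ⟨A, hA, -, h0⟩ := h.exists_mem
    exact ⟨A, hA, h0⟩

lemma quot_hasFiniteProducts [IsAdditiveClass D] : HasFiniteProducts (QuotCat D) := by
  let _ := quotPreadditive D
  have _ : (quotFunctor D).Additive := ⟨rfl⟩
  have tot (A B : T) : (quotFunctor D).map (biprod.fst : A ⊞ B ⟶ A) ≫
      (quotFunctor D).map biprod.inl + (quotFunctor D).map (biprod.snd : A ⊞ B ⟶ B) ≫
      (quotFunctor D).map biprod.inr = 𝟙 _ := by
    rw [← Functor.map_comp, ← Functor.map_comp, ← Functor.map_add, biprod.total,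
      CategoryTheory.Functor.map_id]
  have _ : HasBinaryBiproducts (QuotCat D) := ⟨fun X Y => ⟨⟨{
      bicone := (quotFunctor D).mapBinaryBicone (BinaryBiproduct.bicone X.as Y.as)
      isBilimit := isBinaryBilimitOfTotal _ (tot X.as Y.as) }⟩⟩⟩
  have _ : HasZeroObject (QuotCat D) := by
    obtain ⟨Z, hZ, -⟩ := IsAdditiveClass.zero (D := D)
    refine ⟨⟨(quotFunctor D).obj Z, ?_⟩⟩
    rw [IsZero.iff_id_eq_zero, ← CategoryTheory.Functor.map_id, quot_map_eq_zero_iff]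
    exact FactorsThru.of_mem_src hZ _
  exact hasFiniteProducts_of_has_binary_and_terminal

section KoenigZhu

variable (hD : CotorsionPair D D)
include hD

/-- Kernels modulo a cluster tilting subcategory. -/
lemma exists_kernel_mod {A B : T} (f : A ⟶ B) :
    ∃ (N : T) (n : N ⟶ A), FactorsThru D (n ≫ f) ∧
      (∀ (W : T) (g : W ⟶ A), FactorsThru D (g ≫ f) → ∃ g', FactorsThru D (g - g' ≫ n)) ∧
      (∀ (W : T) (g : W ⟶ N), FactorsThru D (g ≫ n) → FactorsThru D g) := by
  have _ := hD.isAdditiveClass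
  obtain ⟨C₀, C₁, p, q, c, hC₀, hC₁, H⟩ := hD.tri_left B
  obtain ⟨N, a, n, H'⟩ := distinguished_cocone_triangle₂ (f ≫ c)
  refine ⟨N, n, ?_, ?_, ?_⟩
  · obtain ⟨ψ, hψ⟩ := coyC H (n ≫ f) (by rw [Category.assoc]; exact tri23 H')
    exact ⟨C₁, ψ, q, hC₁, hψ.symm⟩
  · rintro W g ⟨Z, x, y, hZ, hxy⟩
    obtain ⟨g', rfl⟩ := coyC H' g (by
      rw [← Category.assoc, ← hxy, Category.assoc, hD.ext_zero hZ hC₀ (y ≫ c), comp_zero])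
    exact ⟨g', by rw [sub_self]; exact FactorsThru.zero⟩
  · rintro W g ⟨Z, x, y, hZ, hxy⟩
    obtain ⟨y', rfl⟩ := coyC H' y (hD.ext_zero hZ hC₀ _)
    obtain ⟨ψ, hψ⟩ := coyB H' (g - x ≫ y') (by
      rw [Preadditive.sub_comp, ← hxy, Category.assoc, sub_self])
    rw [sub_eq_iff_eq_add] at hψ
    rw [hψ]
    exact FactorsThru.add ⟨_, _, _, hC₀, rfl⟩ ⟨_, _, _, hZ, rfl⟩

/-- Cokernels modulo a cluster tilting subcategory. -/
lemma exists_cokernel_mod {A B : T} (f : A ⟶ B) :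
    ∃ (N : T) (n : B ⟶ N), FactorsThru D (f ≫ n) ∧
      (∀ (W : T) (g : B ⟶ W), FactorsThru D (f ≫ g) → ∃ g', FactorsThru D (g - n ≫ g')) ∧
      (∀ (W : T) (g : N ⟶ W), FactorsThru D (n ≫ g) → FactorsThru D g) := by
  have _ := hD.isAdditiveClass
  obtain ⟨D₀, D₁, a, p, h, hD₀, hD₁, H⟩ := hD.tri_right A
  obtain ⟨N, n, m, H'⟩ := distinguished_cocone_triangle₂ (h ≫ f⟦(1 : ℤ)⟧')
  refine ⟨N, n, ?_, ?_, ?_⟩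
  · obtain ⟨ψ, hψ⟩ := yonA H (f ≫ n) (by rw [Functor.map_comp, ← Category.assoc]; exact tri31 H')
    exact ⟨D₀, a, ψ, hD₀, hψ.symm⟩
  · rintro W g ⟨Z, x, y, hZ, hxy⟩
    obtain ⟨g', rfl⟩ := yonA H' g (by
      rw [Category.assoc, ← Functor.map_comp, ← hxy, Functor.map_comp, ← Category.assoc,
        hD.ext_zero hD₁ hZ (h ≫ x⟦(1 : ℤ)⟧'), zero_comp])
    exact ⟨g', by rw [sub_self]; exact FactorsThru.zero⟩
  · rintro W g ⟨Z, x, y, hZ, hxy⟩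
    obtain ⟨x', rfl⟩ := yonA H' x (hD.ext_zero hD₁ hZ _)
    obtain ⟨ψ, hψ⟩ := yonB H' (g - x' ≫ y) (by
      rw [Preadditive.comp_sub, ← hxy, Category.assoc, sub_self])
    rw [sub_eq_iff_eq_add] at hψ
    rw [hψ]
    exact FactorsThru.add ⟨_, _, _, hD₁, rfl⟩ ⟨_, _, _, hZ, rfl⟩

/-- Monomorphisms modulo a cluster tilting subcategory are normal. -/
lemma exists_isKernel_mod {A B : T} (f : A ⟶ B)
    (hf : ∀ (W : T) (g : W ⟶ A), FactorsThru D (g ≫ f) → FactorsThru D g) :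
    ∃ (Z : T) (w : B ⟶ Z), FactorsThru D (f ≫ w) ∧
      (∀ (W : T) (g : W ⟶ B), FactorsThru D (g ≫ w) → ∃ g', FactorsThru D (g - g' ≫ f)) := by
  have _ := hD.isAdditiveClass
  obtain ⟨_, C₀, _, c, _, hC', hC₀, H⟩ := hD.tri_left B
  obtain ⟨K, k, w, H'⟩ := distinguished_cocone_triangle₁ (biprod.desc f c)
  have hk : FactorsThru D k := by
    have e : (k ≫ biprod.fst) ≫ f = -((k ≫ biprod.snd) ≫ c) := by
      rw [eq_neg_iff_add_eq_zero, ← tri12 H', biprod.desc_eq]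
      simp
    have h1 : FactorsThru D (k ≫ biprod.fst) :=
      hf _ _ (e ▸ FactorsThru.neg ⟨_, _, _, hC₀, rfl⟩)
    have e' : k = (k ≫ biprod.fst) ≫ biprod.inl + (k ≫ biprod.snd) ≫ biprod.inr := by
      simp [← Preadditive.comp_add, biprod.total]
    rw [e']
    exact (h1.comp_right _).add ((FactorsThru.of_mem_tgt hC₀ _).comp_right _)
  have hw : biprod.desc f c ≫ w = 0 := tri23 H'
  refine ⟨_, w, ?_, ?_⟩
  · have : f ≫ w = 0 := by rw [← biprod.inl_desc f c, Category.assoc, hw, comp_zero]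
    rw [this]
    exact FactorsThru.zero
  · rintro W g ⟨Z, x, y, hZ, hxy⟩
    obtain ⟨Z', k₁, k₂, hZ', rfl⟩ := hk
    obtain ⟨y', rfl⟩ := coyA1 H' y (by
      rw [Functor.map_comp, ← Category.assoc, hD.ext_zero hZ hZ' (y ≫ k₁⟦(1 : ℤ)⟧'), zero_comp])
    obtain ⟨ψ, hψ⟩ := coyC H' (g - x ≫ y') (by
      rw [Preadditive.sub_comp, ← hxy, Category.assoc, sub_self])
    refine ⟨ψ ≫ biprod.fst, ?_⟩
    have e : g - (ψ ≫ biprod.fst) ≫ f = (ψ ≫ biprod.snd) ≫ c + x ≫ y' := by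
      rw [sub_eq_iff_eq_add] at hψ
      rw [hψ, biprod.desc_eq]
      simp only [Preadditive.comp_add, Category.assoc]
      abel
    rw [e]
    exact FactorsThru.add ⟨_, _, _, hC₀, rfl⟩ ⟨_, _, _, hZ, rfl⟩

/-- Epimorphisms modulo a cluster tilting subcategory are normal. -/
lemma exists_isCokernel_mod {A B : T} (f : A ⟶ B)
    (hf : ∀ (W : T) (g : B ⟶ W), FactorsThru D (f ≫ g) → FactorsThru D g) :
    ∃ (K : T) (k : K ⟶ A), FactorsThru D (k ≫ f) ∧
      (∀ (W : T) (g : A ⟶ W), FactorsThru D (k ≫ g) → ∃ g', FactorsThru D (g - f ≫ g')) := by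
  have _ := hD.isAdditiveClass
  obtain ⟨D₀, _, a, _, _, hD₀, _, H⟩ := hD.tri_right A
  obtain ⟨K, k, s, H'⟩ := distinguished_cocone_triangle₁ (biprod.lift f a)
  have hs : FactorsThru D s := by
    have e : f ≫ biprod.inl ≫ s = -(a ≫ biprod.inr ≫ s) := by
      rw [eq_neg_iff_add_eq_zero, ← tri23 H', biprod.lift_eq]
      simp
    have h1 : FactorsThru D (biprod.inl ≫ s) :=
      hf _ _ (e ▸ FactorsThru.neg ⟨_, _, _, hD₀, rfl⟩)
    have e' : s = biprod.fst ≫ biprod.inl ≫ s + biprod.snd ≫ biprod.inr ≫ s := by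
      rw [← Category.assoc, ← Category.assoc, ← Preadditive.add_comp, biprod.total,
        Category.id_comp]
    rw [e']
    exact (h1.comp_left _).add ((FactorsThru.of_mem_src hD₀ _).comp_left _)
  have hk : k ≫ biprod.lift f a = 0 := tri12 H'
  refine ⟨_, k, ?_, ?_⟩
  · have : k ≫ f = 0 := by rw [← biprod.lift_fst f a, ← Category.assoc, hk, zero_comp]
    rw [this]
    exact FactorsThru.zero
  · rintro W g ⟨Z, x, y, hZ, hxy⟩
    obtain ⟨Z', s₁, s₂, hZ', rfl⟩ := hs
    obtain ⟨x', rfl⟩ := yonA H' x (by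
      rw [Category.assoc, hD.ext_zero hZ' hZ (s₂ ≫ x⟦(1 : ℤ)⟧'), comp_zero])
    obtain ⟨ψ, hψ⟩ := yonB H' (g - x' ≫ y) (by
      rw [Preadditive.comp_sub, ← hxy, Category.assoc, sub_self])
    refine ⟨biprod.inl ≫ ψ, ?_⟩
    have e : g - f ≫ biprod.inl ≫ ψ = a ≫ biprod.inr ≫ ψ + x' ≫ y := by
      rw [sub_eq_iff_eq_add] at hψ
      rw [hψ, biprod.lift_eq]
      simp only [Preadditive.add_comp, Category.assoc]
      abel
    rw [e]
    exact FactorsThru.add ⟨_, _, _, hD₀, rfl⟩ ⟨_, _, _, hZ, rfl⟩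

/-- The quotient by a cluster tilting subcategory is abelian (Koenig–Zhu). -/
theorem CotorsionPair.isAbelian_quot : IsAbelian (QuotCat D) := by
  have _ := hD.isAdditiveClass
  let _ := quotPreadditive D
  have hsub {X Y : T} (f g : X ⟶ Y) :
      (quotFunctor D).map (f - g) = (quotFunctor D).map f - (quotFunctor D).map g :=
    have : (quotFunctor D).Additive := ⟨rfl⟩
    Functor.map_sub _
  have mono_iff {X Y : T} (f : X ⟶ Y) : Mono ((quotFunctor D).map f) ↔
      ∀ (W : T) (g : W ⟶ X), FactorsThru D (g ≫ f) → FactorsThru D g := by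
    rw [Preadditive.mono_iff_cancel_zero]
    constructor
    · intro h W g hg
      rw [← quot_map_eq_zero_iff] at hg ⊢
      exact h _ _ (by rw [← Functor.map_comp, hg])
    · intro h W g hg
      obtain ⟨g, rfl⟩ := quot_exists_rep D g
      erw [← Functor.map_comp, quot_map_eq_zero_iff] at hg
      exact (quot_map_eq_zero_iff D g).2 (h _ _ hg)
  have epi_iff {X Y : T} (f : X ⟶ Y) : Epi ((quotFunctor D).map f) ↔
      ∀ (W : T) (g : Y ⟶ W), FactorsThru D (f ≫ g) → FactorsThru D g := by
    rw [Preadditive.epi_iff_cancel_zero]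
    constructor
    · intro h W g hg
      rw [← quot_map_eq_zero_iff] at hg ⊢
      exact h _ _ (by rw [← Functor.map_comp, hg])
    · intro h W g hg
      obtain ⟨g, rfl⟩ := quot_exists_rep D g
      erw [← Functor.map_comp, quot_map_eq_zero_iff] at hg
      exact (quot_map_eq_zero_iff D g).2 (h _ _ hg)
  -- weak kernels in `T` modulo `D` which are monomorphisms modulo `D` are kernels in `T/D`
  have isKer {N A B : T} (n : N ⟶ A) (f : A ⟶ B) (hn : FactorsThru D (n ≫ f))
      (hw : ∀ (W : T) (g : W ⟶ A), FactorsThru D (g ≫ f) → ∃ g', FactorsThru D (g - g' ≫ n))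
      (hm : Mono ((quotFunctor D).map n)) :
      ∃ w : (quotFunctor D).map n ≫ (quotFunctor D).map f = 0,
        Nonempty (IsLimit (KernelFork.ofι _ w)) := by
    refine ⟨by rw [← Functor.map_comp, quot_map_eq_zero_iff]; exact hn,
      ⟨KernelFork.IsLimit.ofι' _ _ fun {W} g hg => Classical.choice ?_⟩⟩
    obtain ⟨g, rfl⟩ := quot_exists_rep D g
    erw [← Functor.map_comp, quot_map_eq_zero_iff] at hg
    obtain ⟨g', hg'⟩ := hw _ _ hg
    rw [← quot_map_eq_iff, Functor.map_comp] at hg'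
    exact ⟨⟨_, hg'.symm⟩⟩
  have isCoker {A B N : T} (f : A ⟶ B) (n : B ⟶ N) (hn : FactorsThru D (f ≫ n))
      (hw : ∀ (W : T) (g : B ⟶ W), FactorsThru D (f ≫ g) → ∃ g', FactorsThru D (g - n ≫ g'))
      (hm : Epi ((quotFunctor D).map n)) :
      ∃ w : (quotFunctor D).map f ≫ (quotFunctor D).map n = 0,
        Nonempty (IsColimit (CokernelCofork.ofπ _ w)) := by
    refine ⟨by rw [← Functor.map_comp, quot_map_eq_zero_iff]; exact hn,
      ⟨CokernelCofork.IsColimit.ofπ' _ _ fun {W} g hg => Classical.choice ?_⟩⟩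
    obtain ⟨g, rfl⟩ := quot_exists_rep D g
    erw [← Functor.map_comp, quot_map_eq_zero_iff] at hg
    obtain ⟨g', hg'⟩ := hw _ _ hg
    rw [← quot_map_eq_iff, Functor.map_comp] at hg'
    exact ⟨⟨_, hg'.symm⟩⟩
  exact ⟨{
    toPreadditive := quotPreadditive D
    normalMonoOfMono := fun {X Y} f hf => by
      obtain ⟨f, rfl⟩ := quot_exists_rep D f
      obtain ⟨Z, w, h1, h2⟩ := exists_isKernel_mod hD f ((mono_iff f).1 hf)
      obtain ⟨h3, ⟨h4⟩⟩ := isKer f w h1 h2 hf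
      exact ⟨⟨_, _, h3, h4⟩⟩
    normalEpiOfEpi := fun {X Y} f hf => by
      obtain ⟨f, rfl⟩ := quot_exists_rep D f
      obtain ⟨Z, w, h1, h2⟩ := exists_isCokernel_mod hD f ((epi_iff f).1 hf)
      obtain ⟨h3, ⟨h4⟩⟩ := isCoker w f h1 h2 hf
      exact ⟨⟨_, _, h3, h4⟩⟩
    has_finite_products := quot_hasFiniteProducts
    has_kernels := ⟨fun {X Y} f => by
      obtain ⟨f, rfl⟩ := quot_exists_rep D f
      obtain ⟨N, n, h1, h2, h3⟩ := exists_kernel_mod hD f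
      obtain ⟨h4, ⟨h5⟩⟩ := isKer n f h1 h2 ((mono_iff n).2 h3)
      exact ⟨⟨_, h5⟩⟩⟩
    has_cokernels := ⟨fun {X Y} f => by
      obtain ⟨f, rfl⟩ := quot_exists_rep D f
      obtain ⟨N, n, h1, h2, h3⟩ := exists_cokernel_mod hD f
      obtain ⟨h4, ⟨h5⟩⟩ := isCoker f n h1 h2 ((epi_iff n).2 h3)
      exact ⟨⟨_, h5⟩⟩⟩ }⟩

end KoenigZhu

end Abelian

/-! ### Splitting forced by an abelian quotient -/

/-- The identity of `Y'` is a sum of a morphism through `q` and one through `j` whenever `T/U` is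
abelian: the image in `T/U` of the connecting morphism `-i⟦1⟧`, compared with the octahedron on
`C₀ ⟶ Y' ⟶ C₁`, shows that `w` factors through `w ≫ q⟦1⟧`. -/
lemma CotorsionPair.exists_splitting [IsTriangulated T] {U V : T → Prop} (h : CotorsionPair U V)
    (h' : CotorsionPair V U) (hab : IsAbelian (QuotCat U))
    {Y Y' Y'' C₀ C₁ : T} {i : Y ⟶ C₀} {p : C₀ ⟶ Y'} {q : Y' ⟶ Y⟦(1 : ℤ)⟧}
    {j : Y' ⟶ C₁} {r : C₁ ⟶ Y''} {w : Y'' ⟶ Y'⟦(1 : ℤ)⟧}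
    (H₁ : Triangle.mk i p q ∈ distTriang T) (H₂ : Triangle.mk j r w ∈ distTriang T)
    (hC₀ : U C₀) (hC₀' : V C₀) (hC₁ : U C₁) (hY' : V Y') (hY'' : V Y'') :
    ∃ (ρ₁ : Y⟦(1 : ℤ)⟧ ⟶ Y') (ρ₂ : C₁ ⟶ Y'), q ≫ ρ₁ + j ≫ ρ₂ = 𝟙 Y' := by
  have _ := h.isAdditiveClass
  obtain ⟨_⟩ := hab
  obtain ⟨M, u, v, H₁₃⟩ := distinguished_cocone_triangle (p ≫ j)
  obtain ⟨x, y, e₁, e₂, e₃, -, mem⟩ := Triangulated.someOctahedron rfl (rot H₁) H₂ H₁₃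
  have hvU {W : T} {g : W ⟶ M} (hg : FactorsThru U (g ≫ v)) : FactorsThru U g := by
    obtain ⟨Z, a, b, hZ, hab⟩ := hg
    obtain ⟨ψ, rfl⟩ := coyC H₁₃ g (by rw [← hab, h.ext_zero hZ hC₀' b, comp_zero])
    exact ⟨_, _, _, hC₁, rfl⟩
  let φ := (quotFunctor U).map (x ≫ v)
  obtain ⟨⟨I⟩, π, ι, _, _, hφ⟩ : ∃ (I : QuotCat U) (π : (quotFunctor U).obj (Y⟦(1 : ℤ)⟧) ⟶ I)
      (ι : I ⟶ (quotFunctor U).obj (C₀⟦(1 : ℤ)⟧)), Epi π ∧ Mono ι ∧ π ≫ ι = φ :=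
    ⟨_, factorThruImage φ, image.ι φ, inferInstance, inferInstance, image.fac φ⟩
  obtain ⟨π', rfl⟩ := quot_exists_rep U π
  change Y⟦(1 : ℤ)⟧ ⟶ I at π'
  -- `π'` factors through `x`
  obtain ⟨β, rfl⟩ : ∃ β : M ⟶ I, π' = x ≫ β := by
    have hq : (quotFunctor U).map (q ≫ π') = 0 := by
      rw [← cancel_mono ι, zero_comp, Functor.map_comp, Category.assoc]
      erw [hφ]
      rw [← Functor.map_comp, e₂, Preadditive.comp_neg, tri31 H₁, neg_zero, quot_map_eq_zero_iff]
      exact FactorsThru.zero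
    obtain ⟨Z, g, l', hZ, hgl⟩ := (quot_map_eq_zero_iff U _).1 hq
    obtain ⟨g', rfl⟩ := yonA H₂ g (h'.ext_zero hY'' hZ _)
    obtain ⟨b, hb⟩ := yonB H₁₃ (g' ≫ l') (by
      rw [Category.assoc, ← Category.assoc j, hgl, ← Category.assoc, tri23 H₁, zero_comp])
    obtain ⟨z, hz⟩ := yonC (rot H₁) (π' - x ≫ b) (by
      rw [Preadditive.comp_sub, ← hgl, ← Category.assoc q, e₁, Category.assoc, Category.assoc, hb,
        sub_self])
    refine ⟨b + v ≫ z, ?_⟩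
    rw [Preadditive.comp_add, ← Category.assoc x v z, e₂, ← hz]
    abel
  -- the image of `x` in `T/U` factors through its image factor
  obtain ⟨a, ha⟩ : ∃ a : (quotFunctor U).obj I ⟶ (quotFunctor U).obj M,
      (quotFunctor U).map (x ≫ β) ≫ a = (quotFunctor U).map x := by
    suffices H : ∀ (K : QuotCat U) (k : K ⟶ (quotFunctor U).obj (Y⟦(1 : ℤ)⟧)),
        k ≫ (quotFunctor U).map (x ≫ β) = 0 → k ≫ (quotFunctor U).map x = 0 from
      ⟨Abelian.epiDesc _ _ (H _ _ (kernel.condition _)), Abelian.comp_epiDesc _ _ _⟩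
    intro K k hk
    obtain ⟨κ, rfl⟩ := quot_exists_rep U k
    have h0 : (quotFunctor U).map (κ ≫ x ≫ v) = 0 := by
      have e := hk =≫ ι
      rw [Category.assoc, hφ, zero_comp] at e
      rw [Functor.map_comp]
      exact e
    rw [quot_map_eq_zero_iff, ← Category.assoc] at h0
    have h1 := (quot_map_eq_zero_iff U _).2 (hvU h0)
    rwa [Functor.map_comp] at h1
  obtain ⟨a, rfl⟩ := quot_exists_rep U a
  change I ⟶ M at a
  have hs : FactorsThru U (𝟙 M - β ≫ a) := by
    have hx : FactorsThru U (x - (x ≫ β) ≫ a) := by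
      rw [← quot_map_eq_iff, Functor.map_comp]
      exact ha.symm
    apply hvU
    obtain ⟨Z, c, d, hZ, hcd⟩ := hx
    obtain ⟨t, ht⟩ := yonB mem ((𝟙 M - β ≫ a) ≫ v) (by
      rw [← Category.assoc, Preadditive.comp_sub, Category.comp_id, ← Category.assoc, ← hcd,
        Category.assoc, h.ext_zero hZ hC₀' (d ≫ v), comp_zero])
    rw [ht, h'.ext_zero hY'' hC₀ t, comp_zero]
    exact FactorsThru.zero
  have hay : FactorsThru U (a ≫ y) := by
    rw [← quot_map_eq_zero_iff, ← cancel_epi ((quotFunctor U).map (x ≫ β)), comp_zero,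
      Functor.map_comp _ a y, ← Category.assoc]
    erw [ha]
    rw [← Functor.map_comp, tri12 mem, quot_map_eq_zero_iff]
    exact FactorsThru.zero
  have hy : FactorsThru U y := by
    have e : y = (𝟙 M - β ≫ a) ≫ y + β ≫ a ≫ y := by simp [Preadditive.sub_comp]
    rw [e]
    exact (hs.comp_right y).add (hay.comp_left β)
  have hyw : y ≫ w = 0 := by
    obtain ⟨Z, c, d, hZ, rfl⟩ := hy
    rw [Category.assoc, h.ext_zero hZ hY' (d ≫ w), comp_zero]
  obtain ⟨ρ', hρ'⟩ := yonC mem w hyw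
  obtain ⟨ψ, hψ⟩ := yonA1 H₂ (𝟙 _ - q⟦(1 : ℤ)⟧' ≫ ρ') (by
    rw [Preadditive.comp_sub, Category.comp_id, ← Category.assoc, ← hρ', sub_self])
  obtain ⟨ρ', rfl⟩ := (shiftFunctor T (1 : ℤ)).map_surjective ρ'
  obtain ⟨ψ, rfl⟩ := (shiftFunctor T (1 : ℤ)).map_surjective ψ
  refine ⟨ρ', ψ, (shiftFunctor T (1 : ℤ)).map_injective ?_⟩
  rw [Functor.map_add, Functor.map_comp, Functor.map_comp, ← hψ, CategoryTheory.Functor.map_id]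
  abel

/-! ### The part of `V` orthogonal to `U` -/

/-- The objects of `V` having no nonzero morphism to or from an object of `U`. -/
def orthPart (U V : T → Prop) : T → Prop := fun X =>
  V X ∧ ∀ D, U D → (∀ f : D ⟶ X, f = 0) ∧ (∀ f : X ⟶ D, f = 0)

/-- An object of `V` with local endomorphism ring either lies in `U` or is orthogonal to `U`:
the two summands of `𝟙` given by `CotorsionPair.exists_splitting` cannot both be non-units. -/
lemma CotorsionPair.mem_or_orthPart [IsTriangulated T] {U V : T → Prop} (h : CotorsionPair U V)
    (h' : CotorsionPair V U) (hab : IsAbelian (QuotCat U)) {X : T} (hX : V X)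
    (hloc : IsLocalRing (End X)) : U X ∨ orthPart U V X := by
  by_cases hUX : U X
  · exact Or.inl hUX
  refine Or.inr ⟨hX, fun D hD => ⟨?_, ?_⟩⟩
  · obtain ⟨V₁, U₁, i, p, q, hV₁, hU₁, H₁⟩ := h.tri_left X
    obtain ⟨C₁, Y'', j, r, w, hC₁, hY'', H₂⟩ := h'.tri_right X
    obtain ⟨ρ₁, ρ₂, hρ⟩ := h.exists_splitting h' hab H₁ H₂ hU₁ (h.ext_snd _ _ _ H₁ hV₁ hX) hC₁
      hX hY''
    rcases IsLocalRing.isUnit_or_isUnit_of_add_one (R := End X) (a := q ≫ ρ₁) (b := j ≫ ρ₂) hρ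
      with hu | hu
    · have _ : IsIso (q ≫ ρ₁) := (isUnit_iff_isIso (q ≫ ρ₁ : End X)).1 hu
      have hp : p = 0 := by
        rw [← cancel_mono (q ≫ ρ₁), ← Category.assoc, tri23 H₁, zero_comp, zero_comp]
      intro f
      obtain ⟨ψ, rfl⟩ := coyC H₁ f (h.ext_zero hD hV₁ _)
      rw [hp, comp_zero]
    · have _ : IsIso (j ≫ ρ₂) := (isUnit_iff_isIso (j ≫ ρ₂ : End X)).1 hu
      exact (hUX (h.summandClosed_fst ⟨j, ρ₂ ≫ inv (j ≫ ρ₂), by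
        rw [← Category.assoc, IsIso.hom_inv_id]⟩ hC₁)).elim
  · obtain ⟨C₀, Y', i, p, q, hC₀, hY', H₁⟩ := h'.tri_right X
    obtain ⟨C₁, Y'', j, r, w, hC₁, hY'', H₂⟩ := h'.tri_right Y'
    obtain ⟨ρ₁, ρ₂, hρ⟩ := h.exists_splitting h' hab H₁ H₂ hC₀ (h.ext_snd _ _ _ H₁ hX hY') hC₁
      hY' hY''
    obtain ⟨e, he⟩ := (shiftFunctor T (1 : ℤ)).map_surjective (ρ₁ ≫ q)
    rcases IsLocalRing.isUnit_or_isUnit_of_add_one (R := End X) (a := End.of e)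
      (b := 1 - End.of e) (add_sub_cancel _ _) with hu | hu
    · have _ : IsIso e := (isUnit_iff_isIso (e : End X)).1 hu
      have hi : i = 0 := by
        apply (shiftFunctor T (1 : ℤ)).map_injective
        rw [← cancel_epi ((shiftFunctor T (1 : ℤ)).map e), he, Category.assoc, tri31 H₁,
          Functor.map_zero, comp_zero, comp_zero]
      intro f
      obtain ⟨ψ, rfl⟩ := yonA H₁ f (h'.ext_zero hY' hD _)
      rw [hi, zero_comp]
    · have _ : IsIso (𝟙 X - e) := (isUnit_iff_isIso (1 - End.of e)).1 hu
      have hq : q = 0 := by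
        rw [← cancel_mono ((shiftFunctor T (1 : ℤ)).map (𝟙 X - e)), Functor.map_sub, he,
          CategoryTheory.Functor.map_id, Preadditive.comp_sub, Category.comp_id, zero_comp,
          ← Category.assoc]
        have e₁ : q = (q ≫ ρ₁) ≫ q + j ≫ ρ₂ ≫ q := by
          rw [← Category.assoc j, ← Preadditive.add_comp, hρ, Category.id_comp]
        rw [h.ext_zero hC₁ hX (ρ₂ ≫ q), comp_zero, add_zero] at e₁
        rw [← e₁, sub_self]
      obtain ⟨r', hr'⟩ := yonA H₁ (𝟙 X) (by rw [hq, zero_comp])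
      exact (hUX (h.summandClosed_fst ⟨i, r', hr'.symm⟩ hC₀)).elim

/-! ### Krull–Schmidt decomposition of the objects of `V` -/

lemma prop_biproduct {P : T → Prop} (hiso : IsoClosed P) (hsum : SumClosed P)
    (hzero : ∀ Z, IsZero Z → P Z) : ∀ (n : ℕ) (f : Fin n → T), (∀ i, P (f i)) → P (⨁ f)
  | 0, f, _ => hzero _ <| (IsZero.iff_id_eq_zero _).2 <| biproduct.hom_ext _ _ fun i => i.elim0
  | n + 1, f, hf => by
    let e : f 0 ⊞ (⨁ fun i : Fin n => f i.succ) ≅ ⨁ f :=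
      { hom := biprod.desc (biproduct.ι f 0) (biproduct.desc fun i => biproduct.ι f i.succ)
        inv := biprod.lift (biproduct.π f 0) (biproduct.lift fun i => biproduct.π f i.succ)
        hom_inv_id := by
          apply biprod.hom_ext'
          · apply biprod.hom_ext
            · simp
            · apply biproduct.hom_ext
              intro i
              simp [biproduct.ι_π_ne f (Fin.succ_ne_zero i).symm]
          · apply biproduct.hom_ext'
            intro i
            apply biprod.hom_ext
            · simp [biproduct.ι_π_ne f (Fin.succ_ne_zero i)]
            · apply biproduct.hom_ext
              intro k
              by_cases hik : i = k
              · subst hik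
                simp
              · simp [biproduct.ι_π_ne f (fun H => hik (Fin.succ_injective _ H)),
                  biproduct.ι_π_ne _ hik]
        inv_hom_id := by
          apply biproduct.hom_ext'
          intro i
          refine Fin.cases ?_ (fun i => ?_) i
          · rw [biprod.lift_desc, Preadditive.comp_add, biproduct.ι_π_self_assoc]
            have : biproduct.ι f 0 ≫ (biproduct.lift fun i : Fin n => biproduct.π f i.succ) = 0 := by
              apply biproduct.hom_ext
              intro i
              simp [biproduct.ι_π_ne f (Fin.succ_ne_zero i).symm]
            rw [← Category.assoc, this, zero_comp, add_zero, Category.comp_id]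
          · rw [biprod.lift_desc, Preadditive.comp_add, ← Category.assoc,
              biproduct.ι_π_ne f (Fin.succ_ne_zero i), zero_comp, zero_add]
            have : biproduct.ι f i.succ ≫ (biproduct.lift fun i : Fin n => biproduct.π f i.succ) =
                biproduct.ι (fun i : Fin n => f i.succ) i := by
              apply biproduct.hom_ext
              intro k
              by_cases hik : i = k
              · subst hik
                simp
              · simp [biproduct.ι_π_ne f (fun H => hik (Fin.succ_injective _ H)),
                  biproduct.ι_π_ne _ hik]
            rw [← Category.assoc, this, biproduct.ι_desc, Category.comp_id] }
    exact hiso e (hsum (hf 0) (prop_biproduct hiso hsum hzero n _ fun i => hf i.succ))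

lemma orthPart_sumClosed {U V : T → Prop} (hV : SumClosed V) : SumClosed (orthPart U V) := by
  intro X Y hX hY
  refine ⟨hV hX.1 hY.1, fun D hD => ⟨fun f => ?_, fun f => ?_⟩⟩
  · apply biprod.hom_ext
    · rw [(hX.2 D hD).1 (f ≫ biprod.fst), zero_comp]
    · rw [(hY.2 D hD).1 (f ≫ biprod.snd), zero_comp]
  · apply biprod.hom_ext'
    · rw [(hX.2 D hD).2 (biprod.inl ≫ f), comp_zero]
    · rw [(hY.2 D hD).2 (biprod.inr ≫ f), comp_zero]

lemma plusCat_sumClosed {P Q : T → Prop} (hP : SumClosed P) (hQ : SumClosed Q) :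
    SumClosed (plusCat P Q) := by
  rintro X Y ⟨A, B, hA, hB, ⟨e⟩⟩ ⟨A', B', hA', hB', ⟨e'⟩⟩
  refine ⟨A ⊞ A', B ⊞ B', hP hA hA', hQ hB hB', ⟨biprod.mapIso e e' ≪≫ ?_⟩⟩
  exact
    { hom := biprod.lift (biprod.map biprod.fst biprod.fst) (biprod.map biprod.snd biprod.snd)
      inv := biprod.desc (biprod.map biprod.inl biprod.inl) (biprod.map biprod.inr biprod.inr)
      hom_inv_id := by
        ext <;> simp
      inv_hom_id := by
        ext <;> simp }

/-- Every object of `V` is the direct sum of an object of `U` and an object orthogonal to `U`. -/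
lemma CotorsionPair.exists_decomp [IsTriangulated T] {U V : T → Prop} (h : CotorsionPair U V)
    (h' : CotorsionPair V U) (hab : IsAbelian (QuotCat U)) (hKS : IsKrullSchmidt (T := T))
    {X : T} (hX : V X) : plusCat U (orthPart U V) X := by
  obtain ⟨Z, hZU, hZV, hZ⟩ := h.exists_mem
  have hZo : orthPart U V Z :=
    ⟨hZV, fun D _ => ⟨fun f => hZ.eq_of_tgt _ _, fun f => hZ.eq_of_src _ _⟩⟩
  have hiso : IsoClosed (plusCat U (orthPart U V)) := fun X Y e ⟨A, B, hA, hB, ⟨e'⟩⟩ =>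
    ⟨A, B, hA, hB, ⟨e.symm ≪≫ e'⟩⟩
  have inl {A : T} (hA : U A) : plusCat U (orthPart U V) A :=
    ⟨A, Z, hA, hZo, ⟨{ hom := biprod.inl, inv := biprod.fst,
                       inv_hom_id := by ext <;> simp [hZ.eq_of_src biprod.inr 0] }⟩⟩
  have inr {B : T} (hB : orthPart U V B) : plusCat U (orthPart U V) B :=
    ⟨Z, B, hZU, hB, ⟨{ hom := biprod.inr, inv := biprod.snd,
                       inv_hom_id := by ext <;> simp [hZ.eq_of_src (𝟙 Z) 0] }⟩⟩
  obtain ⟨n, f, ⟨e⟩, hf⟩ := hKS X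
  refine hiso e.symm (prop_biproduct hiso
    (plusCat_sumClosed h.ext_fst.sumClosed (orthPart_sumClosed h.ext_snd.sumClosed))
    (fun Z hZ => inl (h.summandClosed_fst.of_isZero hZU hZ)) n f fun i => ?_)
  have hVi : V (f i) := h.summandClosed_snd ⟨biproduct.ι f i ≫ e.inv, e.hom ≫ biproduct.π f i, by
    simp⟩ hX
  rcases h.mem_or_orthPart h' hab hVi (hf i) with hi | hi
  · exact inl hi
  · exact inr hi

/-! ### Connectedness forces `V ⊆ U` -/

section Connected

variable [IsTriangulated T] {U V : T → Prop} (h : CotorsionPair U V) (h' : CotorsionPair V U)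
  (hab : IsAbelian (QuotCat U)) (hKS : IsKrullSchmidt (T := T))
include h h' hab hKS

lemma CotorsionPair.orthPart_of_left {X : T} (hX : V X) (hf : ∀ A, U A → ∀ f : A ⟶ X, f = 0) :
    orthPart U V X := by
  obtain ⟨A, B, hA, hB, ⟨e⟩⟩ := h.exists_decomp h' hab hKS hX
  refine ⟨hX, fun D hD => ⟨hf D hD, fun f => ?_⟩⟩
  rw [← cancel_epi e.inv, comp_zero]
  apply biprod.hom_ext'
  · rw [← Category.assoc, hf A hA (biprod.inl ≫ e.inv), zero_comp, comp_zero]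
  · rw [(hB.2 D hD).2 (biprod.inr ≫ e.inv ≫ f), comp_zero]

lemma CotorsionPair.orthPart_of_right {X : T} (hX : V X) (hf : ∀ A, U A → ∀ f : X ⟶ A, f = 0) :
    orthPart U V X := by
  obtain ⟨A, B, hA, hB, ⟨e⟩⟩ := h.exists_decomp h' hab hKS hX
  refine ⟨hX, fun D hD => ⟨fun f => ?_, hf D hD⟩⟩
  rw [← cancel_mono e.hom, zero_comp]
  apply biprod.hom_ext
  · rw [Category.assoc, hf A hA (e.hom ≫ biprod.fst), comp_zero, zero_comp]
  · rw [(hB.2 D hD).1 ((f ≫ e.hom) ≫ biprod.snd), zero_comp]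

lemma CotorsionPair.orthPart_shift {X : T} (hX : orthPart U V X) :
    orthPart U V (X⟦(1 : ℤ)⟧) := by
  refine h.orthPart_of_left h' hab hKS (h'.mem_fst fun D hD f => ?_)
    fun A hA f => h.ext_zero hA hX.1 f
  obtain ⟨g, rfl⟩ := (shiftFunctor T (1 : ℤ)).map_surjective f
  rw [(hX.2 D hD).2 g, Functor.map_zero]

lemma CotorsionPair.orthPart_unshift {X : T} (hX : orthPart U V X) :
    orthPart U V (X⟦(-1 : ℤ)⟧) := by
  let e : (X⟦(-1 : ℤ)⟧)⟦(1 : ℤ)⟧ ≅ X := (shiftEquiv T (1 : ℤ)).counitIso.app X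
  refine h.orthPart_of_right h' hab hKS (h.mem_snd fun D hD f => ?_) fun A hA f => ?_
  · rw [← cancel_mono e.hom, (hX.2 D hD).1 (f ≫ e.hom), zero_comp]
  · apply (shiftFunctor T (1 : ℤ)).map_injective
    rw [Functor.map_zero, ← cancel_epi e.inv, h'.ext_zero hX.1 hA (e.inv ≫ f⟦(1 : ℤ)⟧'), comp_zero]

/-- If `T` is connected and `T/U` is abelian then `V ⊆ U`: otherwise `T` would be the direct sum of
the part of `V` orthogonal to `U` and its own orthogonal. -/
theorem CotorsionPair.snd_subset_fst (hconn : ConnectedCat (T := T))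
    (hne : ∃ X : T, U X ∧ ¬ IsZero X) {X : T} (hX : V X) : U X := by
  by_contra hUX
  refine hconn ⟨fun A => ∀ X, orthPart U V X → (∀ f : A ⟶ X, f = 0) ∧ (∀ f : X ⟶ A, f = 0),
    orthPart U V, ?_⟩
  have s₁ : SummandClosed (fun A : T =>
      ∀ X, orthPart U V X → (∀ f : A ⟶ X, f = 0) ∧ (∀ f : X ⟶ A, f = 0)) := by
    rintro A B ⟨s, r, hsr⟩ hB X hX
    refine ⟨fun f => ?_, fun f => ?_⟩
    · rw [← Category.id_comp f, ← hsr, Category.assoc, (hB X hX).1 (r ≫ f), comp_zero]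
    · rw [← Category.comp_id f, ← hsr, ← Category.assoc, (hB X hX).2 (f ≫ s), zero_comp]
  have s₂ : SummandClosed (orthPart U V) := by
    rintro A B ⟨s, r, hsr⟩ hB
    refine ⟨h.summandClosed_snd ⟨s, r, hsr⟩ hB.1, fun D hD => ⟨fun f => ?_, fun f => ?_⟩⟩
    · rw [← Category.comp_id f, ← hsr, ← Category.assoc, (hB.2 D hD).1 (f ≫ s), zero_comp]
    · rw [← Category.id_comp f, ← hsr, Category.assoc, (hB.2 D hD).2 (r ≫ f), comp_zero]
  have e₁ : ExtClosed (fun A : T =>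
      ∀ X, orthPart U V X → (∀ f : A ⟶ X, f = 0) ∧ (∀ f : X ⟶ A, f = 0)) := by
    intro A B C' f g k H hA hC X hX
    refine ⟨fun φ => ?_, fun φ => ?_⟩
    · obtain ⟨ψ, rfl⟩ := yonB H φ ((hA X hX).1 _)
      rw [(hC X hX).1 ψ, comp_zero]
    · obtain ⟨ψ, rfl⟩ := coyB H φ ((hC X hX).2 _)
      rw [(hA X hX).2 ψ, zero_comp]
  have e₂ : ExtClosed (orthPart U V) := by
    intro A B C' f g k H hA hC
    refine ⟨h.ext_snd _ _ _ H hA.1 hC.1, fun D hD => ⟨fun φ => ?_, fun φ => ?_⟩⟩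
    · obtain ⟨ψ, rfl⟩ := coyB H φ ((hC.2 D hD).1 _)
      rw [(hA.2 D hD).1 ψ, zero_comp]
    · obtain ⟨ψ, rfl⟩ := yonB H φ ((hA.2 D hD).2 _)
      rw [(hC.2 D hD).2 ψ, comp_zero]
  have hU {A : T} (hA : U A) (X : T) (hX : orthPart U V X) :
      (∀ f : A ⟶ X, f = 0) ∧ (∀ f : X ⟶ A, f = 0) := hX.2 A hA
  have hU1 {A : T} (hA : U A) (X : T) (hX : orthPart U V X) :
      (∀ f : A⟦(1 : ℤ)⟧ ⟶ X, f = 0) ∧ (∀ f : X ⟶ A⟦(1 : ℤ)⟧, f = 0) := by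
    refine ⟨fun f => ?_, fun f => h'.ext_zero hX.1 hA f⟩
    let e : (X⟦(-1 : ℤ)⟧)⟦(1 : ℤ)⟧ ≅ X := (shiftEquiv T (1 : ℤ)).counitIso.app X
    obtain ⟨g, hg⟩ := (shiftFunctor T (1 : ℤ)).map_surjective (f ≫ e.inv)
    rw [← cancel_mono e.inv, ← hg,
      ((h.orthPart_unshift h' hab hKS hX).2 A hA).1 g, Functor.map_zero, zero_comp]
  refine ⟨s₁.isoClosed, s₂.isoClosed, s₁, s₂, e₁, e₂, ?_, ?_, ?_,
    fun X Y hX hY f => (hX Y hY).1 f, fun X Y hX hY f => (hY X hX).2 f⟩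
  · obtain ⟨D, hD, hD0⟩ := hne
    exact ⟨D, hU hD, hD0⟩
  · obtain ⟨A, B, hA, hB, ⟨e⟩⟩ := h.exists_decomp h' hab hKS hX
    refine ⟨B, hB, fun hB0 => hUX (h.summandClosed_fst ⟨e.hom ≫ biprod.fst, biprod.inl ≫ e.inv, ?_⟩
      hA)⟩
    have e₃ : (biprod.fst : A ⊞ B ⟶ A) ≫ biprod.inl = 𝟙 _ := by
      rw [← biprod.total, hB0.eq_of_tgt biprod.snd 0, zero_comp, add_zero]
    rw [Category.assoc, ← Category.assoc biprod.fst, e₃, Category.id_comp, e.hom_inv_id]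
  · intro X
    obtain ⟨V₁, U₁, f, g, k, hV₁, hU₁, H⟩ := h.tri_left X
    obtain ⟨A, B, hA, hB, ⟨e⟩⟩ := h.exists_decomp h' hab hKS hV₁
    have H₁₂ : Triangle.mk (biprod.inl ≫ e.inv) (e.hom ≫ biprod.snd) (0 : B ⟶ A⟦(1 : ℤ)⟧) ∈
        distTriang T :=
      isomorphic_distinguished _ (binaryBiproductTriangle_distinguished A B) _
        (Triangle.isoMk _ _ (Iso.refl _) e (Iso.refl _)
          (show (biprod.inl ≫ e.inv) ≫ e.hom = 𝟙 A ≫ biprod.inl by simp)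
          (show (e.hom ≫ biprod.snd) ≫ 𝟙 B = e.hom ≫ biprod.snd by simp)
          (show (0 : B ⟶ A⟦(1 : ℤ)⟧) ≫ (𝟙 A)⟦(1 : ℤ)⟧' = 𝟙 B ≫ 0 by simp))
    obtain ⟨X₁, u, v, H₁₃⟩ := distinguished_cocone_triangle ((biprod.inl ≫ e.inv) ≫ f)
    obtain ⟨m₁, m₃, -, -, -, -, mem⟩ := Triangulated.someOctahedron rfl H₁₂ H H₁₃
    have hX₁ : ∀ X, orthPart U V X → (∀ f : X₁ ⟶ X, f = 0) ∧ (∀ f : X ⟶ X₁, f = 0) :=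
      e₁ _ _ _ (rot H₁₃) (hU hU₁) (hU1 hA)
    obtain ⟨e', -⟩ := exists_iso_binaryBiproduct_of_distTriang _ (rot mem) (by
      change -m₁⟦(1 : ℤ)⟧' = 0
      rw [(hX₁ B hB).2 m₁, Functor.map_zero, neg_zero])
    exact ⟨X₁, B⟦(1 : ℤ)⟧, hX₁, h.orthPart_shift h' hab hKS hB, ⟨e'⟩⟩

end Connected

/-! ### Cluster tilting cores -/

lemma CotorsionPair.core_clusterTilting [IsTriangulated T] {U V : T → Prop}
    (h : CotorsionPair U V) (h' : CotorsionPair V U) (hUV : ∀ X, U X ↔ V X) :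
    ClusterTilting (fun X => U X ∧ V X) := by
  have hC := h.core_preClusterTilting h'
  have e : (fun X => U X ∧ V X) = rightPerp (fun X => U X ∧ V X) := by
    funext X
    refine propext ⟨fun hX D hD => hC.rigid hD hX, fun hX => ?_⟩
    have hV : V X := h.mem_snd fun A hA => hX ⟨hA, (hUV A).1 hA⟩
    exact ⟨(hUV X).2 hV, hV⟩
  exact { hC with eq_rightPerp := e, eq_leftPerp := e.trans hC.perp_eq }

/-- A cluster tilting core absorbs the first class of every pair of opposite cotorsion pairs with
that core. -/
lemma ClusterTilting.eq_fst {C S R : T → Prop} (hC : ClusterTilting C)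
    (h' : CotorsionPair R S) (hSR : (fun X => S X ∧ R X) = C) : S = C := by
  funext X
  refine propext ⟨fun hX => ?_, fun hX => ?_⟩
  · rw [hC.eq_rightPerp]
    intro D hD
    rw [← hSR] at hD
    exact h'.ext_zero hD.2 hX
  · rw [← hSR] at hX
    exact hX.1

/-- Assume `T` is connected, `(U,V)` and `(V,U)` are cotorsion pairs,
`C := U ∩ V` contains a nonzero object. Then (a) `C` is cluster tilting, (b) the
uniqueness property for twin cotorsion pairs with intersection `C`, (c) `T/C` abelian,
and (d) `T/U` and `T/V` abelian, are all equivalent. -/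
theorem stmt4 [IsTriangulated T] (hKS : IsKrullSchmidt (T := T))
    (hconn : ConnectedCat (T := T))
    (U V : T → Prop) (hUiso : IsoClosed U) (hUsum : SumClosed U)
    (hViso : IsoClosed V) (hVsum : SumClosed V)
    (hUV : CotorsionPair U V) (hVU : CotorsionPair V U)
    (hne : ∃ X : T, (U X ∧ V X) ∧ ¬ IsZero X) :
    (ClusterTilting (fun X => U X ∧ V X) ↔
      (∀ S R : T → Prop, IsoClosed S → SumClosed S → IsoClosed R → SumClosed R →
        CotorsionPair S R → CotorsionPair R S →
        ((fun X => S X ∧ R X) = fun X => U X ∧ V X) → S = fun X => U X ∧ V X)) ∧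
    (ClusterTilting (fun X => U X ∧ V X) ↔ IsAbelian (QuotCat (fun X => U X ∧ V X))) ∧
    (ClusterTilting (fun X => U X ∧ V X) ↔
      (IsAbelian (QuotCat U) ∧ IsAbelian (QuotCat V))) := by
  have hC := hUV.core_preClusterTilting hVU
  have hswap : (fun X => V X ∧ U X) = fun X => U X ∧ V X := funext fun X => propext and_comm
  refine ⟨⟨?_, ?_⟩, ⟨?_, ?_⟩, ⟨?_, ?_⟩⟩
  · intro hCT S R _ _ _ _ _ hRS hSR
    exact hCT.eq_fst hRS hSR
  · intro hb
    have hU := hb U V hUiso hUsum hViso hVsum hUV hVU rfl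
    have hV := hb V U hViso hVsum hUiso hUsum hVU hUV hswap
    exact hUV.core_clusterTilting hVU fun X => by rw [congrFun hU X, ← congrFun hV X]
  · intro hCT
    have h := hC.cotorsionPair_fst
    rw [← hCT.eq_rightPerp] at h
    exact h.isAbelian_quot
  · intro hab
    -- with `C^⊥1` in the role of `V`, connectedness gives `C^⊥1 ⊆ C`
    have e : (fun X => U X ∧ V X) = rightPerp (fun X => U X ∧ V X) := funext fun X => propext
      ⟨fun hX D hD => hC.rigid hD hX, fun hX =>
        hC.cotorsionPair_fst.snd_subset_fst hC.cotorsionPair_snd hab hKS hconn hne hX⟩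
    exact { hC with eq_rightPerp := e, eq_leftPerp := e.trans hC.perp_eq }
  · intro hCT
    have hUeqV : U = V := (hCT.eq_fst hVU rfl).trans (hCT.eq_fst hUV hswap).symm
    subst hUeqV
    exact ⟨hUV.isAbelian_quot, hUV.isAbelian_quot⟩
  · rintro ⟨habU, habV⟩
    obtain ⟨X₀, ⟨hU₀, hV₀⟩, hX₀⟩ := hne
    exact hUV.core_clusterTilting hVU fun X =>
      ⟨hVU.snd_subset_fst hUV habV hKS hconn ⟨X₀, hV₀, hX₀⟩,
        hUV.snd_subset_fst hVU habU hKS hconn ⟨X₀, hU₀, hX₀⟩⟩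

end ClusterPaper
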